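/- Let H₁ and H₂ be complex Hilbert spaces, and let A : H₁ → H₁, B : H₂ → H₁, E : H₁ → H₂, D : H₂ → H₂ be bounded operators. Let K ≥ 1 and ε > 0 satisfy: A is invertible with ‖A⁻¹‖ ≤ K, ‖B‖ ≤ K, ‖E‖ ≤ K, D is invertible with ‖D⁻¹‖ ≤ ε, and ε·K³ ≤ 1/2. Then the block operator T : H₁ × H₂ → H₁ × H₂, T(x₁,x₂) = (A x₁ + B x₂, E x₁ + D x₂), is invertible, and ‖T⁻¹ - T₀‖ ≤ 2ε(1 + K²)², where T₀ is the block operator with (1,1)-entry A⁻¹ and all other entries zero, i.e. T₀(x₁,x₂) = (A⁻¹x₁, 0). -/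

import Mathlib

open ContinuousLinearMap

/-- The block operator `(x₁, x₂) ↦ (A x₁ + B x₂, E x₁ + D x₂)` on the Hilbert direct sum
`H₁ ⊕ H₂`, realised as `WithLp 2 (H₁ × H₂)`. -/
noncomputable def blockOp {H₁ H₂ : Type*}
    [NormedAddCommGroup H₁] [InnerProductSpace ℂ H₁]
    [NormedAddCommGroup H₂] [InnerProductSpace ℂ H₂]
    (A : H₁ →L[ℂ] H₁) (B : H₂ →L[ℂ] H₁) (E : H₁ →L[ℂ] H₂) (D : H₂ →L[ℂ] H₂) :
    WithLp 2 (H₁ × H₂) →L[ℂ] WithLp 2 (H₁ × H₂) :=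
  ((WithLp.prodContinuousLinearEquiv 2 ℂ H₁ H₂).symm :
      H₁ × H₂ →L[ℂ] WithLp 2 (H₁ × H₂)) ∘L
    ((A ∘L ContinuousLinearMap.fst ℂ H₁ H₂ + B ∘L ContinuousLinearMap.snd ℂ H₁ H₂).prod
      (E ∘L ContinuousLinearMap.fst ℂ H₁ H₂ + D ∘L ContinuousLinearMap.snd ℂ H₁ H₂)) ∘L
    ((WithLp.prodContinuousLinearEquiv 2 ℂ H₁ H₂) :
      WithLp 2 (H₁ × H₂) →L[ℂ] H₁ × H₂)

/-!
Eliminating the first coordinate of `T = [[A, B], [E, D]]` leaves the Schur complement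
`S = D - E A⁻¹ B`, and
`T⁻¹ = [[A⁻¹, 0], [0, 0]] + (-A⁻¹ B; 1) S⁻¹ (-E A⁻¹, 1)`,
so the error is a product of a column, `S⁻¹` and a row. Since `‖D⁻¹ E A⁻¹ B‖ ≤ ε k³ ≤ 1/2`, the
Neumann series for `S = D (1 - D⁻¹ E A⁻¹ B)` gives `‖S⁻¹‖ ≤ 2 ε`, while the column and the row
have norm at most `1 + k²`.
-/

open scoped Ring ENNReal

theorem isUnit_sub_of_norm_inverse_mul_lt_one {R : Type*} [NormedRing R]
    [HasSummableGeomSeries R] {c d : R} (hd : IsUnit d)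
    (hc : ‖d⁻¹ʳ * c‖ < 1) : IsUnit (d - c) := by
  have hfactor : d - c = d * (1 - d⁻¹ʳ * c) := by
    rw [mul_sub, mul_one, Ring.mul_inverse_cancel_left _ _ hd]
  exact hfactor ▸ hd.mul (isUnit_one_sub_of_norm_lt_one hc)

theorem norm_inverse_sub_le_div {R : Type*} [SeminormedRing R] {c d : R} (hd : IsUnit d)
    (hdc : IsUnit (d - c)) (hc : ‖d⁻¹ʳ * c‖ < 1) :
    ‖(d - c)⁻¹ʳ‖ ≤ ‖d⁻¹ʳ‖ / (1 - ‖d⁻¹ʳ * c‖) := by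
  have hresolvent : (d - c)⁻¹ʳ = d⁻¹ʳ + d⁻¹ʳ * c * (d - c)⁻¹ʳ := by
    have h := Ring.inverse_sub_inverse (iff_of_true hd hdc)
    rwa [sub_sub_cancel_left, mul_neg, neg_mul, sub_eq_iff_eq_add, neg_add_eq_sub,
      eq_sub_iff_add_eq, eq_comm] at h
  have hnorm : ‖(d - c)⁻¹ʳ‖ ≤ ‖d⁻¹ʳ‖ + ‖d⁻¹ʳ * c‖ * ‖(d - c)⁻¹ʳ‖ :=
    calc ‖(d - c)⁻¹ʳ‖ = ‖d⁻¹ʳ + d⁻¹ʳ * c * (d - c)⁻¹ʳ‖ := congrArg _ hresolvent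
      _ ≤ ‖d⁻¹ʳ‖ + ‖d⁻¹ʳ * c‖ * ‖(d - c)⁻¹ʳ‖ := by grw [norm_add_le, norm_mul_le]
  rw [le_div_iff₀ (sub_pos.2 hc)]
  linarith

section Algebra

variable {𝕜 U U' V₁ V₂ W W' : Type*} [Semiring 𝕜]
  [AddCommMonoid U] [Module 𝕜 U] [TopologicalSpace U]
  [AddCommMonoid U'] [Module 𝕜 U'] [TopologicalSpace U']
  [AddCommGroup V₁] [Module 𝕜 V₁] [TopologicalSpace V₁]
  [AddCommGroup V₂] [Module 𝕜 V₂] [TopologicalSpace V₂]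
  [AddCommMonoid W] [Module 𝕜 W] [TopologicalSpace W] [ContinuousAdd W]
  [AddCommMonoid W'] [Module 𝕜 W'] [TopologicalSpace W'] [ContinuousAdd W']

/-- The operator `x ↦ (f x, g x)` into the `ℓᵖ` direct sum: a column of operators. -/
noncomputable def lpProd (p : ℝ≥0∞) (f : U →L[𝕜] V₁) (g : U →L[𝕜] V₂) :
    U →L[𝕜] WithLp p (V₁ × V₂) :=
  ((WithLp.prodContinuousLinearEquiv p 𝕜 V₁ V₂).symm : V₁ × V₂ →L[𝕜] WithLp p (V₁ × V₂)) ∘L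
    f.prod g

/-- The operator `(x₁, x₂) ↦ f x₁ + g x₂` on the `ℓᵖ` direct sum: a row of operators. -/
noncomputable def lpCoprod (p : ℝ≥0∞) (f : V₁ →L[𝕜] W) (g : V₂ →L[𝕜] W) :
    WithLp p (V₁ × V₂) →L[𝕜] W :=
  f ∘L WithLp.fstL p 𝕜 V₁ V₂ + g ∘L WithLp.sndL p 𝕜 V₁ V₂

variable {p : ℝ≥0∞}

theorem lpProd_comp (f : U →L[𝕜] V₁) (g : U →L[𝕜] V₂) (h : U' →L[𝕜] U) :
    lpProd p f g ∘L h = lpProd p (f ∘L h) (g ∘L h) := rfl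

theorem comp_lpCoprod (h : W →L[𝕜] W') (f : V₁ →L[𝕜] W) (g : V₂ →L[𝕜] W) :
    h ∘L lpCoprod p f g = lpCoprod p (h ∘L f) (h ∘L g) := by
  simp only [lpCoprod, comp_add, comp_assoc]

theorem lpCoprod_comp_lpProd (f : V₁ →L[𝕜] W) (g : V₂ →L[𝕜] W) (u : U →L[𝕜] V₁)
    (v : U →L[𝕜] V₂) : lpCoprod p f g ∘L lpProd p u v = f ∘L u + g ∘L v := rfl

theorem lpCoprod_add_lpCoprod (f f' : V₁ →L[𝕜] W) (g g' : V₂ →L[𝕜] W) :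
    lpCoprod p f g + lpCoprod p f' g' = lpCoprod p (f + f') (g + g') := by
  simp only [lpCoprod, add_comp]
  abel

variable [ContinuousAdd V₁] [ContinuousAdd V₂]

/-- The `2 × 2` block operator `(x₁, x₂) ↦ (A x₁ + B x₂, E x₁ + D x₂)` on the `ℓᵖ` direct sum,
encoded as the column of its two rows. -/
noncomputable def lpBlockOp (p : ℝ≥0∞) (A : V₁ →L[𝕜] V₁) (B : V₂ →L[𝕜] V₁) (E : V₁ →L[𝕜] V₂)
    (D : V₂ →L[𝕜] V₂) : WithLp p (V₁ × V₂) →L[𝕜] WithLp p (V₁ × V₂) :=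
  lpProd p (lpCoprod p A B) (lpCoprod p E D)

theorem lpBlockOp_one : lpBlockOp p (1 : V₁ →L[𝕜] V₁) 0 0 (1 : V₂ →L[𝕜] V₂) = 1 := by
  ext x
  exact WithLp.ofLp_injective p (Prod.ext (by simp [lpBlockOp, lpProd, lpCoprod])
    (by simp [lpBlockOp, lpProd, lpCoprod]))

theorem lpBlockOp_mul (A A' : V₁ →L[𝕜] V₁) (B B' : V₂ →L[𝕜] V₁) (E E' : V₁ →L[𝕜] V₂)
    (D D' : V₂ →L[𝕜] V₂) :
    lpBlockOp p A B E D * lpBlockOp p A' B' E' D' =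
      lpBlockOp p (A * A' + B ∘L E') (A ∘L B' + B ∘L D') (E ∘L A' + D ∘L E')
        (E ∘L B' + D * D') := by
  simp only [lpBlockOp, mul_def, lpProd_comp, lpCoprod_comp_lpProd, comp_lpCoprod,
    lpCoprod_add_lpCoprod]

end Algebra

section Norm

variable {𝕜 U V₁ V₂ W : Type*} [NontriviallyNormedField 𝕜]
  [SeminormedAddCommGroup U] [NormedSpace 𝕜 U] [SeminormedAddCommGroup V₁] [NormedSpace 𝕜 V₁]
  [SeminormedAddCommGroup V₂] [NormedSpace 𝕜 V₂] [SeminormedAddCommGroup W] [NormedSpace 𝕜 W]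
  {p : ℝ≥0∞} [Fact (1 ≤ p)]

theorem lpProd_add_lpProd (f f' : U →L[𝕜] V₁) (g g' : U →L[𝕜] V₂) :
    lpProd p f g + lpProd p f' g' = lpProd p (f + f') (g + g') := rfl

theorem norm_lpProd_le (f : U →L[𝕜] V₁) (g : U →L[𝕜] V₂) : ‖lpProd p f g‖ ≤ ‖f‖ + ‖g‖ := by
  have hsplit (x : U) : lpProd p f g x = WithLp.toLp p (f x, 0) + WithLp.toLp p (0, g x) := by
    simp [lpProd, ← WithLp.toLp_add]
  refine opNorm_le_bound _ (by positivity) fun x ↦ ?_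
  calc ‖lpProd p f g x‖ ≤ ‖f x‖ + ‖g x‖ := by
        grw [hsplit, norm_add_le, WithLp.norm_toLp_fst, WithLp.norm_toLp_snd]
    _ ≤ (‖f‖ + ‖g‖) * ‖x‖ := by grw [f.le_opNorm, g.le_opNorm, add_mul]

theorem norm_lpCoprod_le (f : V₁ →L[𝕜] W) (g : V₂ →L[𝕜] W) :
    ‖lpCoprod p f g‖ ≤ ‖f‖ + ‖g‖ := by
  refine opNorm_le_bound _ (by positivity) fun x ↦ ?_
  calc ‖f x.fst + g x.snd‖ ≤ ‖f‖ * ‖x.fst‖ + ‖g‖ * ‖x.snd‖ := by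
        grw [norm_add_le, f.le_opNorm, g.le_opNorm]
    _ ≤ (‖f‖ + ‖g‖) * ‖x‖ := by
        grw [WithLp.norm_fst_le, WithLp.norm_snd_le, add_mul]

end Norm

section Schur

variable {𝕜 V₁ V₂ : Type*} [NontriviallyNormedField 𝕜]
  [SeminormedAddCommGroup V₁] [NormedSpace 𝕜 V₁]
  [SeminormedAddCommGroup V₂] [NormedSpace 𝕜 V₂] {p : ℝ≥0∞}

/-- The Schur complement `D - E A⁻¹ B` of the block `A` in `[[A, B], [E, D]]`; it is meaningful
when `A` is a unit, since `A⁻¹ʳ = 0` otherwise. -/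
noncomputable def schurCompl (A : V₁ →L[𝕜] V₁) (B : V₂ →L[𝕜] V₁) (E : V₁ →L[𝕜] V₂)
    (D : V₂ →L[𝕜] V₂) : V₂ →L[𝕜] V₂ :=
  D - E ∘L A⁻¹ʳ ∘L B

/-- The column `(-A⁻¹ B; 1)`, the left factor of `S⁻¹` in the inverse of `[[A, B], [E, D]]` with
Schur complement `S`. -/
noncomputable def schurCol (p : ℝ≥0∞) (A : V₁ →L[𝕜] V₁) (B : V₂ →L[𝕜] V₁) :
    V₂ →L[𝕜] WithLp p (V₁ × V₂) :=
  lpProd p (-(A⁻¹ʳ ∘L B)) (.id 𝕜 V₂)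

/-- The row `(-E A⁻¹, 1)`, the right factor of `S⁻¹` in the inverse of `[[A, B], [E, D]]` with
Schur complement `S`. -/
noncomputable def schurRow (p : ℝ≥0∞) (A : V₁ →L[𝕜] V₁) (E : V₁ →L[𝕜] V₂) :
    WithLp p (V₁ × V₂) →L[𝕜] V₂ :=
  lpCoprod p (-(E ∘L A⁻¹ʳ)) (.id 𝕜 V₂)

variable {A : V₁ →L[𝕜] V₁} {B : V₂ →L[𝕜] V₁} {E : V₁ →L[𝕜] V₂} {D : V₂ →L[𝕜] V₂}

theorem lpBlockOp_comp_schurCol (hA : IsUnit A) :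
    lpBlockOp p A B E D ∘L schurCol p A B = lpProd p 0 (schurCompl A B E D) := by
  have hfst : A ∘L (-(A⁻¹ʳ ∘L B)) + B ∘L .id 𝕜 V₂ = 0 := by
    rw [comp_neg, ← comp_assoc, ← mul_def, Ring.mul_inverse_cancel A hA, one_def, id_comp, comp_id,
      neg_add_cancel]
  have hsnd : E ∘L (-(A⁻¹ʳ ∘L B)) + D ∘L .id 𝕜 V₂ = schurCompl A B E D := by
    rw [comp_neg, comp_id, neg_add_eq_sub, schurCompl]
  rw [lpBlockOp, schurCol, lpProd_comp, lpCoprod_comp_lpProd, lpCoprod_comp_lpProd, hfst, hsnd]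

theorem schurRow_comp_lpBlockOp (hA : IsUnit A) :
    schurRow p A E ∘L lpBlockOp p A B E D = lpCoprod p 0 (schurCompl A B E D) := by
  have hfst : (-(E ∘L A⁻¹ʳ)) ∘L A + .id 𝕜 V₂ ∘L E = 0 := by
    rw [neg_comp, comp_assoc, ← mul_def, Ring.inverse_mul_cancel A hA, one_def, id_comp, comp_id,
      neg_add_cancel]
  have hsnd : (-(E ∘L A⁻¹ʳ)) ∘L B + .id 𝕜 V₂ ∘L D = schurCompl A B E D := by
    rw [neg_comp, comp_assoc, id_comp, neg_add_eq_sub, schurCompl]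
  rw [lpBlockOp, schurRow, lpCoprod_comp_lpProd, comp_lpCoprod, comp_lpCoprod,
    lpCoprod_add_lpCoprod, hfst, hsnd]

/-- The candidate `[[A⁻¹, 0], [0, 0]] + (-A⁻¹ B; 1) S⁻¹ (-E A⁻¹, 1)` for the inverse of
`[[A, B], [E, D]]`, where `S` is the Schur complement. -/
noncomputable def schurInverse (p : ℝ≥0∞) [Fact (1 ≤ p)] (A : V₁ →L[𝕜] V₁) (B : V₂ →L[𝕜] V₁)
    (E : V₁ →L[𝕜] V₂) (D : V₂ →L[𝕜] V₂) : WithLp p (V₁ × V₂) →L[𝕜] WithLp p (V₁ × V₂) :=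
  lpBlockOp p A⁻¹ʳ 0 0 0 + schurCol p A B ∘L (schurCompl A B E D)⁻¹ʳ ∘L schurRow p A E

variable [Fact (1 ≤ p)]

theorem lpBlockOp_mul_schurInverse (hA : IsUnit A) (hS : IsUnit (schurCompl A B E D)) :
    lpBlockOp p A B E D * schurInverse p A B E D = 1 := by
  have hdiag : lpBlockOp p A B E D * lpBlockOp p A⁻¹ʳ 0 0 0 =
      lpBlockOp p 1 0 (E ∘L A⁻¹ʳ) 0 := by
    simp [lpBlockOp_mul, Ring.mul_inverse_cancel A hA]
  have hschur : lpBlockOp p A B E D *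
      (schurCol p A B ∘L (schurCompl A B E D)⁻¹ʳ ∘L schurRow p A E) =
        lpProd p 0 (schurRow p A E) := by
    rw [mul_def, ← comp_assoc, lpBlockOp_comp_schurCol hA, lpProd_comp, zero_comp, ← comp_assoc,
      ← mul_def, Ring.mul_inverse_cancel _ hS]
    rfl
  rw [schurInverse, mul_add, hdiag, hschur, lpBlockOp, lpProd_add_lpProd, add_zero, schurRow,
    lpCoprod_add_lpCoprod, add_neg_cancel, zero_add]
  exact lpBlockOp_one

theorem schurInverse_mul_lpBlockOp (hA : IsUnit A) (hS : IsUnit (schurCompl A B E D)) :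
    schurInverse p A B E D * lpBlockOp p A B E D = 1 := by
  have hdiag : lpBlockOp p A⁻¹ʳ 0 0 0 * lpBlockOp p A B E D =
      lpBlockOp p 1 (A⁻¹ʳ ∘L B) 0 0 := by
    simp [lpBlockOp_mul, Ring.inverse_mul_cancel A hA]
  have hschur : (schurCol p A B ∘L (schurCompl A B E D)⁻¹ʳ ∘L schurRow p A E) *
      lpBlockOp p A B E D = lpBlockOp p 0 (-(A⁻¹ʳ ∘L B)) 0 1 := by
    rw [mul_def, comp_assoc, comp_assoc, schurRow_comp_lpBlockOp hA, comp_lpCoprod, comp_zero,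
      ← mul_def, Ring.inverse_mul_cancel _ hS, schurCol, lpProd_comp, comp_lpCoprod, comp_lpCoprod,
      comp_zero, comp_zero]
    rfl
  rw [schurInverse, add_mul, hdiag, hschur, lpBlockOp, lpBlockOp, lpProd_add_lpProd,
    lpCoprod_add_lpCoprod, lpCoprod_add_lpCoprod, add_neg_cancel, add_zero, add_zero, zero_add]
  exact lpBlockOp_one

theorem isUnit_lpBlockOp (hA : IsUnit A) (hS : IsUnit (schurCompl A B E D)) :
    IsUnit (lpBlockOp p A B E D) :=
  isUnit_iff_exists.2 ⟨_, lpBlockOp_mul_schurInverse hA hS, schurInverse_mul_lpBlockOp hA hS⟩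

theorem inverse_lpBlockOp (hA : IsUnit A) (hS : IsUnit (schurCompl A B E D)) :
    (lpBlockOp p A B E D)⁻¹ʳ = schurInverse p A B E D :=
  left_inv_eq_right_inv (Ring.inverse_mul_cancel _ (isUnit_lpBlockOp hA hS))
    (lpBlockOp_mul_schurInverse hA hS)

theorem norm_inverse_lpBlockOp_sub_le (hA : IsUnit A) (hS : IsUnit (schurCompl A B E D)) :
    ‖(lpBlockOp p A B E D)⁻¹ʳ - lpBlockOp p A⁻¹ʳ 0 0 0‖ ≤
      (‖A⁻¹ʳ ∘L B‖ + 1) * (‖(schurCompl A B E D)⁻¹ʳ‖ * (‖E ∘L A⁻¹ʳ‖ + 1)) := by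
  have hcol : ‖schurCol p A B‖ ≤ ‖A⁻¹ʳ ∘L B‖ + 1 := by
    grw [schurCol, norm_lpProd_le, norm_neg, norm_id_le]
  have hrow : ‖schurRow p A E‖ ≤ ‖E ∘L A⁻¹ʳ‖ + 1 := by
    grw [schurRow, norm_lpCoprod_le, norm_neg, norm_id_le]
  rw [inverse_lpBlockOp hA hS, schurInverse, add_sub_cancel_left]
  grw [opNorm_comp_le, opNorm_comp_le, hcol, hrow]

end Schur

theorem schur_quantitative_inversion_general {𝕜 V₁ V₂ : Type*} [NontriviallyNormedField 𝕜]
    [SeminormedAddCommGroup V₁] [NormedSpace 𝕜 V₁]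
    [NormedAddCommGroup V₂] [NormedSpace 𝕜 V₂] [CompleteSpace V₂]
    {p : ℝ≥0∞} [Fact (1 ≤ p)]
    {A : V₁ →L[𝕜] V₁} {B : V₂ →L[𝕜] V₁} {E : V₁ →L[𝕜] V₂} {D : V₂ →L[𝕜] V₂} {k ε : ℝ}
    (hA : IsUnit A) (hAinv : ‖A⁻¹ʳ‖ ≤ k) (hB : ‖B‖ ≤ k) (hE : ‖E‖ ≤ k)
    (hD : IsUnit D) (hDinv : ‖D⁻¹ʳ‖ ≤ ε) (hsmall : ε * k ^ 3 ≤ 1 / 2) :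
    IsUnit (lpBlockOp p A B E D) ∧
      ‖(lpBlockOp p A B E D)⁻¹ʳ - lpBlockOp p A⁻¹ʳ 0 0 0‖ ≤ 2 * ε * (1 + k ^ 2) ^ 2 := by
  have hk : 0 ≤ k := (norm_nonneg B).trans hB
  have hε : 0 ≤ ε := (norm_nonneg _).trans hDinv
  have hAB : ‖A⁻¹ʳ ∘L B‖ ≤ k ^ 2 := by grw [opNorm_comp_le, hAinv, hB, sq]
  have hEA : ‖E ∘L A⁻¹ʳ‖ ≤ k ^ 2 := by grw [opNorm_comp_le, hAinv, hE, sq]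
  have hDEAB : ‖D⁻¹ʳ * (E ∘L A⁻¹ʳ ∘L B)‖ ≤ 1 / 2 :=
    calc ‖D⁻¹ʳ * (E ∘L A⁻¹ʳ ∘L B)‖ ≤ ε * (k * k ^ 2) := by
          grw [norm_mul_le, opNorm_comp_le, hDinv, hE, hAB]
      _ ≤ 1 / 2 := by rwa [← pow_succ']
  have hS : IsUnit (schurCompl A B E D) :=
    isUnit_sub_of_norm_inverse_mul_lt_one hD (by linarith)
  have hSinv : ‖(schurCompl A B E D)⁻¹ʳ‖ ≤ 2 * ε :=
    calc ‖(schurCompl A B E D)⁻¹ʳ‖ ≤ ‖D⁻¹ʳ‖ / (1 - ‖D⁻¹ʳ * (E ∘L A⁻¹ʳ ∘L B)‖) :=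
          norm_inverse_sub_le_div hD hS (by linarith)
      _ ≤ ε / (1 - 1 / 2) := by gcongr
      _ = 2 * ε := by ring
  refine ⟨isUnit_lpBlockOp hA hS, (norm_inverse_lpBlockOp_sub_le hA hS).trans ?_⟩
  grw [hAB, hEA, hSinv]
  exact le_of_eq (by ring)

theorem blockOp_eq_lpBlockOp {H₁ H₂ : Type*}
    [NormedAddCommGroup H₁] [InnerProductSpace ℂ H₁]
    [NormedAddCommGroup H₂] [InnerProductSpace ℂ H₂]
    (A : H₁ →L[ℂ] H₁) (B : H₂ →L[ℂ] H₁) (E : H₁ →L[ℂ] H₂) (D : H₂ →L[ℂ] H₂) :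
    blockOp A B E D = lpBlockOp 2 A B E D := rfl

/-- Quantitative Schur-complement inversion: if `‖A⁻¹‖, ‖B‖, ‖E‖ ≤ k`,
`‖D⁻¹‖ ≤ ε` and `ε k³ ≤ 1/2`, then the block operator `T = [[A, B], [E, D]]` is invertible
and `‖T⁻¹ - [[A⁻¹, 0], [0, 0]]‖ ≤ 2ε(1 + k²)²`. -/
theorem schur_quantitative_inversion {H₁ H₂ : Type*}
    [NormedAddCommGroup H₁] [InnerProductSpace ℂ H₁] [CompleteSpace H₁]
    [NormedAddCommGroup H₂] [InnerProductSpace ℂ H₂] [CompleteSpace H₂]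
    (A : H₁ →L[ℂ] H₁) (B : H₂ →L[ℂ] H₁) (E : H₁ →L[ℂ] H₂) (D : H₂ →L[ℂ] H₂)
    (k ε : ℝ) (hk : 1 ≤ k) (hε : 0 < ε)
    (hA : IsUnit A) (hAinv : ‖(Ring.inverse A : H₁ →L[ℂ] H₁)‖ ≤ k)
    (hB : ‖B‖ ≤ k) (hE : ‖E‖ ≤ k)
    (hD : IsUnit D) (hDinv : ‖(Ring.inverse D : H₂ →L[ℂ] H₂)‖ ≤ ε)
    (hsmall : ε * k ^ 3 ≤ 1 / 2) :
    IsUnit (blockOp A B E D) ∧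
    ‖Ring.inverse (blockOp A B E D) - blockOp (Ring.inverse A) 0 0 0‖
      ≤ 2 * ε * (1 + k ^ 2) ^ 2 := by
  simp only [blockOp_eq_lpBlockOp]
  exact schur_quantitative_inversion_general hA hAinv hB hE hD hDinv hsmall
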